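/- arXiv:2405.06850 — 6 statements merged into one kernel-verified Lean document; each statement's English description precedes it below -/
import Mathlib

section
/- Consider the n-player effort game in which player i chooses e_i ∈ ℝ and receives payoff û_i(e) = (c + ⟨x_i, β⟩ + ⟨(GX)_i, γ⟩ + ε_i)·(α + ⟨x_i, θ⟩ + δ e_i + η_i) − e_i²/2 + λ e_i (Ge)_i, where G is a row-normalized interaction matrix (so (Ge)_i does not depend on e_i because G has zero diagonal) and |λ| < 1. Then a strategy profile e ∈ ℝⁿ is a Nash equilibrium (i.e., for every i and every t ∈ ℝ, replacing e_i by t does not increase û_i) if and only if e = δ(I − λG)^{-1}(c𝟙 + Xβ + GXγ + ε); in particular the game has a unique Nash equilibrium. -/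
/-!
In its own effort, player `i`'s payoff is the concave quadratic
`const + (δ vᵢ + λ (Ge)ᵢ) t − t² / 2` with `v = c𝟙 + Xβ + GXγ + ε`, because the zero diagonal of
`G` makes `(Ge)ᵢ` independent of `t` (`mulVec_update_self`). Its unique maximizer is the linear
coefficient (`quadratic_le_iff_eq`), so the Nash condition is the linear system
`(I − λG) e = δ v`. Since `|λ| < 1` and the row sums of `G` are at most `1`, the matrix `I − λG`
is strictly diagonally dominant, hence invertible (`isUnit_det_one_sub_smul`), and the system has
the stated solution as its only one.
-/

open Matrix

/-- A row-normalized interaction matrix: nonnegative entries, zero diagonal, and each row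
either sums to 1 (a non-isolated student) or is identically zero (an isolated student). -/
def RowNormalized {n : ℕ} (G : Matrix (Fin n) (Fin n) ℝ) : Prop :=
  (∀ i j, 0 ≤ G i j) ∧ (∀ i, G i i = 0) ∧ (∀ i, (∑ j, G i j = 1) ∨ (∀ j, G i j = 0))

/-- Player `i`'s payoff in the effort game:
`û_i(e) = (c + ⟨x_i, β⟩ + ⟨(GX)_i, γ⟩ + ε_i) ⬝ (α + ⟨x_i, θ⟩ + δ e_i + η_i) − e_i²/2
          + λ e_i (Ge)_i`. -/
noncomputable def effortPayoff {n K : ℕ} (G : Matrix (Fin n) (Fin n) ℝ)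
    (X : Matrix (Fin n) (Fin K) ℝ) (β γ θ : Fin K → ℝ) (c α δ lam : ℝ)
    (ε η : Fin n → ℝ) (e : Fin n → ℝ) (i : Fin n) : ℝ :=
  (c + X i ⬝ᵥ β + (G * X) i ⬝ᵥ γ + ε i) * (α + X i ⬝ᵥ θ + δ * e i + η i)
    - e i ^ 2 / 2 + lam * e i * (G *ᵥ e) i

/-- `I − λG` is strictly diagonally dominant by rows: the diagonal entries are `1`, while the
off-diagonal entries of a row have total absolute value at most `|λ| < 1`. -/
lemma isUnit_det_one_sub_smul {n : ℕ} {G : Matrix (Fin n) (Fin n) ℝ} (hG : RowNormalized G)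
    {lam : ℝ} (hlam : |lam| < 1) : IsUnit (1 - lam • G).det := by
  obtain ⟨hpos, hdiag, hrow⟩ := hG
  refine isUnit_iff_ne_zero.mpr (det_ne_zero_of_sum_row_lt_diag fun k => ?_)
  have hoff : ∑ j ∈ Finset.univ.erase k, ‖(1 - lam • G) k j‖
      = ∑ j ∈ Finset.univ.erase k, |lam| * G k j := by
    refine Finset.sum_congr rfl fun j hj => ?_
    have hkj : k ≠ j := (Finset.ne_of_mem_erase hj).symm
    simp [Matrix.one_apply_ne hkj, abs_of_nonneg (hpos k j)]
  have hle : ∑ j, G k j ≤ 1 := by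
    rcases hrow k with h | h
    · exact h.le
    · simp [h]
  have hsum : ∑ j ∈ Finset.univ.erase k, |lam| * G k j = |lam| * ∑ j, G k j := by
    rw [Finset.mul_sum, Finset.sum_erase]
    simp [hdiag]
  have hone : ‖(1 - lam • G) k k‖ = 1 := by simp [hdiag]
  rw [hoff, hsum, hone]
  nlinarith [abs_nonneg lam]

/-- With zero diagonal, the peer aggregate `(Ge)_i` does not react to player `i`'s own effort. -/
lemma mulVec_update_self {n : ℕ} {G : Matrix (Fin n) (Fin n) ℝ} (hdiag : ∀ i, G i i = 0)
    (e : Fin n → ℝ) (i : Fin n) (t : ℝ) :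
    (G *ᵥ Function.update e i t) i = (G *ᵥ e) i := by
  simp only [Matrix.mulVec, dotProduct]
  refine Finset.sum_congr rfl fun j _ => ?_
  by_cases h : j = i
  · subst h
    simp [hdiag]
  · simp [h]

/-- A concave quadratic with linear coefficient `b` and leading coefficient `-1/2` is maximized
exactly at `b`. -/
lemma quadratic_le_iff_eq (a b s : ℝ) :
    (∀ t : ℝ, a + b * t - t ^ 2 / 2 ≤ a + b * s - s ^ 2 / 2) ↔ s = b := by
  constructor
  · intro h
    have := h b
    have h0 : (s - b) ^ 2 ≤ 0 := by nlinarith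
    exact sub_eq_zero.mp (pow_eq_zero_iff two_ne_zero |>.mp (le_antisymm h0 (sq_nonneg _)))
  · rintro rfl t
    nlinarith [sq_nonneg (t - s)]

/-- `e` is a Nash equilibrium of the effort game if and only if
`e = δ (I − λG)⁻¹ (c𝟙 + Xβ + GXγ + ε)`; in particular the Nash equilibrium is unique. -/
theorem stmt_2 {n K : ℕ} (G : Matrix (Fin n) (Fin n) ℝ) (hG : RowNormalized G)
    (X : Matrix (Fin n) (Fin K) ℝ) (β γ θ : Fin K → ℝ) (c α δ lam : ℝ)
    (hlam : |lam| < 1) (ε η : Fin n → ℝ) (e : Fin n → ℝ) :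
    (∀ i : Fin n, ∀ t : ℝ,
        effortPayoff G X β γ θ c α δ lam ε η (Function.update e i t) i
          ≤ effortPayoff G X β γ θ c α δ lam ε η e i)
      ↔ e = δ • ((1 - lam • G)⁻¹ *ᵥ ((fun _ => c) + X *ᵥ β + (G * X) *ᵥ γ + ε)) := by
  set v : Fin n → ℝ := (fun _ => c) + X *ᵥ β + (G * X) *ᵥ γ + ε with hv
  have hdet := isUnit_det_one_sub_smul hG hlam
  have hbest : ∀ i : Fin n, (∀ t : ℝ,
      effortPayoff G X β γ θ c α δ lam ε η (Function.update e i t) i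
        ≤ effortPayoff G X β γ θ c α δ lam ε η e i)
      ↔ e i = δ * v i + lam * (G *ᵥ e) i := by
    intro i
    have hvi : c + X i ⬝ᵥ β + (G * X) i ⬝ᵥ γ + ε i = v i := rfl
    rw [← quadratic_le_iff_eq (v i * (α + X i ⬝ᵥ θ + η i)) _ (e i)]
    refine forall_congr' fun t => ?_
    simp only [effortPayoff, mulVec_update_self hG.2.1, Function.update_self, hvi]
    constructor <;> intro h <;> linarith
  have hlin : (∀ i, e i = δ * v i + lam * (G *ᵥ e) i) ↔ (1 - lam • G) *ᵥ e = δ • v := by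
    rw [funext_iff]
    refine forall_congr' fun i => ?_
    simp only [Matrix.sub_mulVec, Matrix.one_mulVec, Matrix.smul_mulVec, Pi.sub_apply,
      Pi.smul_apply, smul_eq_mul]
    constructor <;> intro h <;> linarith
  rw [forall_congr' hbest, hlin, ← Matrix.mulVec_smul]
  constructor
  · intro h
    rw [← h, Matrix.mulVec_mulVec, Matrix.nonsing_inv_mul _ hdet, Matrix.one_mulVec]
  · intro h
    rw [h, Matrix.mulVec_mulVec, Matrix.mul_nonsing_inv _ hdet, Matrix.one_mulVec]
end

section
/- Let G be a row-normalized interaction matrix, λ ∈ ℝ with |λ| < 1, and δ ∈ ℝ with δ ≠ 0. Let X ∈ ℝ^{n×K}, β, γ, θ ∈ ℝ^K, c, α ∈ ℝ, and ε, η ∈ ℝⁿ. Define the equilibrium effort e = (I − λG)^{-1}(δc𝟙 + δXβ + δGXγ + δε) and the achievement vector y = α𝟙 + δe + Xθ + η. Then y satisfies the reduced-form equation y = κ + λGy + X(δ²β + θ) + GX(δ²γ − λθ) + (η − λGη) + δ²ε, where κ ∈ ℝⁿ is the vector with entries κ_i = δ²c + (1 − λ(G𝟙)_i)α. -/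
/-!
The matrix `1 - lam • G` is strictly diagonally dominant: its diagonal entries are `1`, while the
absolute values of the off-diagonal entries of a row sum to at most `|lam| < 1`. Hence it is
invertible, so the effort `e` is a genuine solution of `e - lam • G e = b`. Applying
`1 - lam • G` to `y = α𝟙 + δe + Xθ + η` and substituting this equation gives the reduced form.
-/

open Matrix

theorem RowNormalized.det_one_sub_smul_ne_zero {n : ℕ} {G : Matrix (Fin n) (Fin n) ℝ}
    (hG : RowNormalized G) {lam : ℝ} (hlam : |lam| < 1) : (1 - lam • G).det ≠ 0 := by
  obtain ⟨hnn, hdiag, hrow⟩ := hG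
  apply det_ne_zero_of_sum_row_lt_diag
  intro k
  have hsum : ∑ j, G k j ≤ 1 := by
    rcases hrow k with h | h
    · exact h.le
    · simp [h]
  have hoff : ∑ j ∈ Finset.univ.erase k, ‖(1 - lam • G) k j‖
      = ∑ j ∈ Finset.univ.erase k, |lam| * G k j := by
    refine Finset.sum_congr rfl fun j hj => ?_
    have hkj : k ≠ j := (Finset.ne_of_mem_erase hj).symm
    simp [Matrix.one_apply_ne hkj, abs_of_nonneg (hnn k j)]
  calc ∑ j ∈ Finset.univ.erase k, ‖(1 - lam • G) k j‖
      = |lam| * ∑ j ∈ Finset.univ.erase k, G k j := by rw [hoff, Finset.mul_sum]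
    _ ≤ |lam| * ∑ j, G k j := by
        gcongr
        · exact fun j _ _ => hnn k j
        · exact Finset.erase_subset _ _
    _ ≤ |lam| * 1 := by gcongr
    _ < 1 := by simpa using hlam
    _ = ‖(1 - lam • G) k k‖ := by simp [hdiag k]

/-- The equilibrium achievement vector
`y = α𝟙 + δe + Xθ + η`, with `e = (I − λG)⁻¹(δc𝟙 + δXβ + δGXγ + δε)` the equilibrium
effort, satisfies the reduced-form equation
`y = κ + λGy + X(δ²β + θ) + GX(δ²γ − λθ) + (η − λGη) + δ²ε`,
where `κ_i = δ²c + (1 − λ(G𝟙)_i)α`. -/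
theorem stmt_3 {n K : ℕ} (G : Matrix (Fin n) (Fin n) ℝ) (hG : RowNormalized G)
    (lam δ : ℝ) (hlam : |lam| < 1) (hδ : δ ≠ 0)
    (X : Matrix (Fin n) (Fin K) ℝ) (β γ θ : Fin K → ℝ) (c α : ℝ) (ε η : Fin n → ℝ)
    (e y κ : Fin n → ℝ)
    (he : e = (1 - lam • G)⁻¹ *ᵥ
      ((δ * c) • (fun _ => (1 : ℝ)) + δ • (X *ᵥ β) + δ • ((G * X) *ᵥ γ) + δ • ε))
    (hy : y = α • (fun _ => (1 : ℝ)) + δ • e + X *ᵥ θ + η)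
    (hκ : ∀ i, κ i = δ ^ 2 * c + (1 - lam * (G *ᵥ fun _ => (1 : ℝ)) i) * α) :
    y = κ + lam • (G *ᵥ y) + X *ᵥ (δ ^ 2 • β + θ) + (G * X) *ᵥ (δ ^ 2 • γ - lam • θ)
        + (η - lam • (G *ᵥ η)) + δ ^ 2 • ε := by
  have hdet : IsUnit (1 - lam • G).det :=
    (hG.det_one_sub_smul_ne_zero hlam).isUnit
  have hmul : (1 - lam • G) *ᵥ e =
      (δ * c) • (fun _ => (1 : ℝ)) + δ • (X *ᵥ β) + δ • ((G * X) *ᵥ γ) + δ • ε := by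
    rw [he, mulVec_mulVec, Matrix.mul_nonsing_inv _ hdet, one_mulVec]
  have hGy : G *ᵥ y = α • (G *ᵥ fun _ => (1 : ℝ)) + δ • (G *ᵥ e) + (G * X) *ᵥ θ + G *ᵥ η := by
    rw [hy]
    simp only [mulVec_add, mulVec_smul, mulVec_mulVec]
  rw [sub_mulVec, one_mulVec, smul_mulVec] at hmul
  rw [hGy]
  ext i
  have hei := congrFun hmul i
  have hyi := congrFun hy i
  simp only [mulVec_add, mulVec_sub, mulVec_smul, Pi.add_apply, Pi.sub_apply, Pi.smul_apply,
    smul_eq_mul, hκ] at hei hyi ⊢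
  linear_combination hyi + δ * hei
end

section
/- Let G be a row-normalized interaction matrix and λ ∈ ℝ with |λ| < 1. Let β̃, γ̃ ∈ ℝ^K and ΔX ∈ ℝ^{n×K}. Then (I − λG)^{-1}(ΔX β̃ + G ΔX γ̃) = ΔX β̃ + ∑_{k=0}^∞ λ^k G^{k+1} ΔX (λβ̃ + γ̃), where the series converges entrywise. In particular, a change ΔX in the characteristics affects the outcome vector through the contextual channel if and only if λβ̃ + γ̃ ≠ 0. -/
/-!
In the `ℓ^∞` operator norm (maximal absolute row sum) a row-normalized matrix satisfies `‖G‖ ≤ 1`,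
so `‖λG‖ < 1` and the Neumann series `∑ (λG)^k` converges to `(1 - λG)⁻¹`. Applying both sides to
the vector `G ΔX (λβ̃ + γ̃)` gives the series in question, and its limit has the stated form because
`(1 - λG)⁻¹ - 1 = (1 - λG)⁻¹ λG`.
-/

open Matrix

section Neumann

attribute [local instance] Matrix.linftyOpNormedRing Matrix.linftyOpNormedAlgebra

lemma RowNormalized.norm_le_one {n : ℕ} {G : Matrix (Fin n) (Fin n) ℝ} (hG : RowNormalized G) :
    ‖G‖ ≤ 1 := by
  obtain ⟨hpos, -, hrow⟩ := hG
  rw [Matrix.linfty_opNorm_def]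
  norm_cast
  refine Finset.sup_le fun i _ => ?_
  rw [← NNReal.coe_le_coe]
  push_cast
  have habs : ∀ j, ‖G i j‖ = G i j := fun j => Real.norm_of_nonneg (hpos i j)
  rcases hrow i with h | h
  · simp [habs, h]
  · simp [h]

/-- Both conclusions are free of the norm: the sum is taken in the product topology, and
invertibility of the determinant ensures that the matrix inverse is not a junk value. -/
lemma RowNormalized.neumann {n : ℕ} {G : Matrix (Fin n) (Fin n) ℝ} (hG : RowNormalized G)
    {lam : ℝ} (hlam : |lam| < 1) :
    IsUnit (1 - lam • G).det ∧ HasSum (fun k : ℕ => (lam • G) ^ k) (1 - lam • G)⁻¹ := by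
  have hnorm : ‖lam • G‖ < 1 := by
    calc ‖lam • G‖ ≤ ‖lam‖ * ‖G‖ := norm_smul_le _ _
      _ ≤ |lam| * 1 := mul_le_mul_of_nonneg_left hG.norm_le_one (abs_nonneg _)
      _ < 1 := by simpa using hlam
  refine ⟨(Matrix.isUnit_iff_isUnit_det _).1 (isUnit_one_sub_of_norm_lt_one hnorm), ?_⟩
  rw [Matrix.nonsing_inv_eq_ringInverse]
  exact hasSum_geom_series_inverse _ hnorm

end Neumann

/-- `(I − λG)⁻¹(ΔX β̃ + G ΔX γ̃) = ΔX β̃ + ∑_{k=0}^∞ λ^k G^{k+1} ΔX (λβ̃ + γ̃)`,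
the series converging entrywise (i.e. in the product topology on `Fin n → ℝ`). -/
theorem stmt_5 {n K : ℕ} (G : Matrix (Fin n) (Fin n) ℝ) (hG : RowNormalized G)
    (lam : ℝ) (hlam : |lam| < 1) (βt γt : Fin K → ℝ) (ΔX : Matrix (Fin n) (Fin K) ℝ) :
    HasSum (fun k : ℕ => lam ^ k • ((G ^ (k + 1) * ΔX) *ᵥ (lam • βt + γt)))
      ((1 - lam • G)⁻¹ *ᵥ (ΔX *ᵥ βt + (G * ΔX) *ᵥ γt) - ΔX *ᵥ βt) := by
  obtain ⟨hdet, hsum⟩ := hG.neumann hlam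
  have key : (1 - lam • G)⁻¹ *ᵥ (ΔX *ᵥ βt + (G * ΔX) *ᵥ γt) - ΔX *ᵥ βt
      = (1 - lam • G)⁻¹ *ᵥ ((G * ΔX) *ᵥ (lam • βt + γt)) := by
    have h1 : ΔX *ᵥ βt = (1 - lam • G)⁻¹ *ᵥ ((1 - lam • G) *ᵥ (ΔX *ᵥ βt)) := by
      rw [mulVec_mulVec, Matrix.nonsing_inv_mul _ hdet, one_mulVec]
    nth_rewrite 2 [h1]
    rw [← mulVec_sub]
    congr 1
    simp only [sub_mulVec, one_mulVec, smul_mulVec, mulVec_add, mulVec_smul, ← mulVec_mulVec]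
    abel
  rw [key]
  let φ : Matrix (Fin n) (Fin n) ℝ →+ (Fin n → ℝ) :=
    { toFun := fun M => M *ᵥ ((G * ΔX) *ᵥ (lam • βt + γt))
      map_zero' := zero_mulVec _
      map_add' := fun M N => add_mulVec M N _ }
  have hφ : Continuous φ := Continuous.matrix_mulVec continuous_id continuous_const
  have hterm : (fun k : ℕ => lam ^ k • ((G ^ (k + 1) * ΔX) *ᵥ (lam • βt + γt)))
      = φ ∘ fun k => (lam • G) ^ k := by
    funext k
    change _ = (lam • G) ^ k *ᵥ ((G * ΔX) *ᵥ (lam • βt + γt))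
    rw [smul_pow, smul_mulVec, mulVec_mulVec, pow_succ, Matrix.mul_assoc]
  rw [hterm]
  exact hsum.map φ hφ
end

section
/- Let G be a row-normalized interaction matrix, λ ∈ ℝ with |λ| < 1, β̃, γ̃ ∈ ℝ^K, and ΔX ∈ ℝ^{n×K}. Define Δy = (I − λG)^{-1}(ΔX β̃ + G ΔX γ̃). If an index i satisfies (G ΔX)_i = 0 and (G² ΔX)_i = 0 (i.e., the i-th rows of GΔX and G²ΔX are zero), then (G Δy)_i = λ (G² Δy)_i. -/
/-!
Write `v = ΔX β̃ + G ΔX γ̃`, so that `(1 - λG) Δy = v`. Multiplying by `G` gives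
`G Δy - λ G² Δy = G v = (G ΔX) β̃ + (G² ΔX) γ̃`, whose `i`-th entry vanishes because the `i`-th rows
of `G ΔX` and `G² ΔX` do.
-/

open Matrix

/-- With `Δy = (I − λG)⁻¹(ΔX β̃ + G ΔX γ̃)`, if the `i`-th rows of `GΔX` and
`G²ΔX` vanish, then `(G Δy)_i = λ (G² Δy)_i`. -/
theorem stmt_6 {n K : ℕ} (G : Matrix (Fin n) (Fin n) ℝ) (hG : RowNormalized G)
    (lam : ℝ) (hlam : |lam| < 1) (βt γt : Fin K → ℝ) (ΔX : Matrix (Fin n) (Fin K) ℝ)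
    (Δy : Fin n → ℝ)
    (hΔy : Δy = (1 - lam • G)⁻¹ *ᵥ (ΔX *ᵥ βt + (G * ΔX) *ᵥ γt))
    (i : Fin n) (h1 : ∀ k, (G * ΔX) i k = 0) (h2 : ∀ k, ((G ^ 2 * ΔX : Matrix (Fin n) (Fin K) ℝ)) i k = 0) :
    (G *ᵥ Δy) i = lam * ((G ^ 2) *ᵥ Δy) i := by
  have hGv : (G *ᵥ (ΔX *ᵥ βt + (G * ΔX) *ᵥ γt)) i = 0 := by
    have e : G *ᵥ (ΔX *ᵥ βt + (G * ΔX) *ᵥ γt) = (G * ΔX) *ᵥ βt + (G ^ 2 * ΔX) *ᵥ γt := by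
      simp only [mulVec_add, mulVec_mulVec, pow_two, Matrix.mul_assoc]
    rw [e]
    simp [mulVec, dotProduct, h1, h2]
  by_cases hu : IsUnit (1 - lam • G).det
  · -- Multiply the structural equation `(1 - λG) Δy = ΔX β̃ + G ΔX γ̃` by `G` and read off row `i`.
    have hy : (1 - lam • G) *ᵥ Δy = ΔX *ᵥ βt + (G * ΔX) *ᵥ γt := by
      rw [hΔy, mulVec_mulVec, mul_nonsing_inv _ hu, one_mulVec]
    rw [← hy, mulVec_mulVec, Matrix.mul_sub, Matrix.mul_one, Matrix.mul_smul, ← pow_two,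
      sub_mulVec, smul_mulVec, Pi.sub_apply, Pi.smul_apply, smul_eq_mul] at hGv
    exact sub_eq_zero.mp hGv
  · -- Were `1 - λG` singular, its `Matrix` inverse would be the junk value `0`, so `Δy = 0`.
    rw [nonsing_inv_apply_not_isUnit _ hu, zero_mulVec] at hΔy
    simp [hΔy]
end

section
/- Let G be a row-normalized interaction matrix, let λ ∈ (0,1), and let β̃, γ̃ ∈ ℝ^K with λβ̃ + γ̃ ≠ 0. Suppose there exist indices i₁ ≠ l such that G_{i₁,l} = 0, (G²)_{i₁,l} = 0, (G³)_{i₁,l} > 0 (students separated by a link of distance exactly three), and such that every j with G_{i₁,j} > 0 is non-isolated. For each X ∈ ℝ^{n×K} define y(X) = (I − λG)^{-1}(Xβ̃ + GXγ̃). Then there do NOT exist vectors β̇, γ̇ ∈ ℝ^K such that for every X ∈ ℝ^{n×K} and every pair of non-isolated indices i, i′: (G y(X))_i − (G y(X))_{i′} = ⟨X_i − X_{i′}, β̇⟩ + ⟨(GX)_i − (GX)_{i′}, γ̇⟩. That is, the average peer outcome is not perfectly collinear with own characteristics and contextual characteristics, so the reflection problem does not arise. -/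
/-!
The hypothetical collinearity relation is tested on characteristics `X` concentrated in one
coordinate `k` with `λ β̃ₖ + γ̃ₖ ≠ 0`, and of the form `(I − λG) u` there, so that the inverse
cancels. The relation then says that, writing `b, c` for the `k`-th entries of `β̃, γ̃` and
`b', c'` for those of the alleged coefficients, the matrix
`T = −b' I + (b − c' + λb') G + (c + λc') G²` has equal rows at all non-isolated students
(`peer_relation_reduces`). Since `i₁` and all its friends are non-isolated, averaging over the
friends of `i₁` shows that row `i₁` of `G T` equals row `i₁` of `T`: a cubic relation between
`I, G, G², G³` on that row.

Along a shortest path `i₁ → j → m → l`, the powers `G³`, `G²`, `G` are successively the lowest ones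
with a nonzero entry in columns `l`, `m`, `j`, so all three coefficients of `T` vanish
(`coeffs_eq_zero`). Eliminating `b', c'` gives `c + λb = 0`, contrary to the choice of `k`.
-/

open Matrix

namespace RowNormalized

variable {n : ℕ} {G : Matrix (Fin n) (Fin n) ℝ}

lemma sum_le_one (hG : RowNormalized G) (i : Fin n) : ∑ j, G i j ≤ 1 := by
  rcases hG.2.2 i with h | h
  · exact h.le
  · simp [h]

/-- `I − λG` is strictly diagonally dominant, hence invertible. -/
lemma isUnit_det (hG : RowNormalized G) {lam : ℝ} (h0 : 0 < lam) (h1 : lam < 1) :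
    IsUnit (1 - lam • G).det := by
  rw [isUnit_iff_ne_zero]
  apply det_ne_zero_of_sum_row_lt_diag
  intro i
  have hoff : ∀ j ∈ Finset.univ.erase i, ‖(1 - lam • G) i j‖ = lam * G i j := by
    intro j hj
    have hne : i ≠ j := (Finset.ne_of_mem_erase hj).symm
    simp [Matrix.one_apply_ne hne, abs_of_pos h0, abs_of_nonneg (hG.1 i j)]
  rw [Finset.sum_congr rfl hoff, ← Finset.mul_sum]
  have hle : ∑ j ∈ Finset.univ.erase i, G i j ≤ 1 :=
    (Finset.sum_le_sum_of_subset_of_nonneg (Finset.erase_subset _ _)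
      fun j _ _ => hG.1 i j).trans (hG.sum_le_one i)
  have hdiag : ‖(1 - lam • G) i i‖ = 1 := by simp [hG.2.1 i]
  rw [hdiag]
  nlinarith

/-- The collinearity relation, read in a single coordinate `k` of the characteristics and with the
inverse of `I − λG` cleared. -/
lemma peer_relation_reduces {K : ℕ} (hG : RowNormalized G) {lam : ℝ} (h0 : 0 < lam) (h1 : lam < 1)
    {βt γt βd γd : Fin K → ℝ}
    (h : ∀ X : Matrix (Fin n) (Fin K) ℝ,
      ∀ i i' : Fin n, (∑ j, G i j = 1) → (∑ j, G i' j = 1) →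
        (G *ᵥ ((1 - lam • G)⁻¹ *ᵥ (X *ᵥ βt + (G * X) *ᵥ γt))) i
            - (G *ᵥ ((1 - lam • G)⁻¹ *ᵥ (X *ᵥ βt + (G * X) *ᵥ γt))) i'
          = (X i - X i') ⬝ᵥ βd + ((G * X) i - (G * X) i') ⬝ᵥ γd)
    (k : Fin K) (u : Fin n → ℝ) {i i' : Fin n} (hi : ∑ j, G i j = 1) (hi' : ∑ j, G i' j = 1) :
    ((-βd k) • u + (βt k - γd k + lam * βd k) • (G *ᵥ u)
        + (γt k + lam * γd k) • (G *ᵥ (G *ᵥ u))) i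
      = ((-βd k) • u + (βt k - γd k + lam * βd k) • (G *ᵥ u)
        + (γt k + lam * γd k) • (G *ᵥ (G *ᵥ u))) i' := by
  set v : Fin n → ℝ := (1 - lam • G) *ᵥ u with hv
  have hv' : v = u - lam • (G *ᵥ u) := by rw [hv, sub_mulVec, one_mulVec, smul_mulVec]
  have hrel := h (vecMulVec v (Pi.single k 1)) i i' hi hi'
  have hinv : (1 - lam • G)⁻¹ *ᵥ (vecMulVec v (Pi.single k 1) *ᵥ βt
      + (G * vecMulVec v (Pi.single k 1)) *ᵥ γt) = βt k • u + γt k • (G *ᵥ u) := by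
    have harg : vecMulVec v (Pi.single k 1) *ᵥ βt + (G * vecMulVec v (Pi.single k 1)) *ᵥ γt
        = (1 - lam • G) *ᵥ (βt k • u + γt k • (G *ᵥ u)) := by
      rw [← mulVec_mulVec, vecMulVec_mulVec, vecMulVec_mulVec, hv']
      simp only [single_one_dotProduct, op_smul_eq_smul, mulVec_smul, mulVec_sub, mulVec_add,
        sub_mulVec, one_mulVec, smul_mulVec]
    rw [harg, mulVec_mulVec, nonsing_inv_mul _ (hG.isUnit_det h0 h1), one_mulVec]
  have hX : ∀ (w : Fin K → ℝ) (a : Fin n), vecMulVec v (Pi.single k 1) a ⬝ᵥ w = v a * w k := by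
    intro w a
    have := congrFun (vecMulVec_mulVec v (Pi.single k 1) w) a
    simpa [mulVec, mul_comm] using this
  have hGX : ∀ (w : Fin K → ℝ) (a : Fin n),
      (G * vecMulVec v (Pi.single k 1)) a ⬝ᵥ w = (G *ᵥ v) a * w k := by
    intro w a
    have := congrFun (mulVec_mulVec w G (vecMulVec v (Pi.single k 1))) a
    rw [vecMulVec_mulVec] at this
    simp only [single_one_dotProduct, op_smul_eq_smul, mulVec_smul] at this
    simpa [mulVec, mul_comm] using this.symm
  rw [hinv, sub_dotProduct, sub_dotProduct, hX, hX, hGX, hGX, hv'] at hrel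
  simp only [mulVec_smul, mulVec_sub, mulVec_add, Pi.add_apply, Pi.sub_apply, Pi.smul_apply,
    smul_eq_mul] at hrel ⊢
  linarith

/-- A quadratic polynomial in `G` whose columns are constant across non-isolated students has zero coefficients,
provided some non-isolated student with non-isolated friends is at distance three from another. -/
lemma coeffs_eq_zero (hG : RowNormalized G) {i₁ l : Fin n} (hil : i₁ ≠ l)
    (h1 : G i₁ l = 0) (h2 : (G ^ 2 : Matrix (Fin n) (Fin n) ℝ) i₁ l = 0)
    (h3 : 0 < (G ^ 3 : Matrix (Fin n) (Fin n) ℝ) i₁ l)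
    (hfriends : ∀ j, 0 < G i₁ j → ∑ k, G j k = 1) {p q r : ℝ}
    (h : ∀ (u : Fin n → ℝ) (i i' : Fin n), (∑ j, G i j = 1) → (∑ j, G i' j = 1) →
      (p • u + q • (G *ᵥ u) + r • (G *ᵥ (G *ᵥ u))) i
        = (p • u + q • (G *ᵥ u) + r • (G *ᵥ (G *ᵥ u))) i') :
    p = 0 ∧ q = 0 ∧ r = 0 := by
  have hsq : ∀ a b, (G ^ 2 : Matrix (Fin n) (Fin n) ℝ) a b = ∑ j, G a j * G j b := by
    intro a b; rw [pow_two, mul_apply]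
  have hsq_pos : ∀ a j b, 0 < G a j → 0 < G j b →
      0 < (G ^ 2 : Matrix (Fin n) (Fin n) ℝ) a b := by
    intro a j b haj hjb
    rw [hsq]
    exact (mul_pos haj hjb).trans_le (Finset.single_le_sum
      (f := fun j => G a j * G j b) (fun x _ => mul_nonneg (hG.1 a x) (hG.1 x b))
      (Finset.mem_univ j))
  have hsq_nonneg : ∀ a b, 0 ≤ (G ^ 2 : Matrix (Fin n) (Fin n) ℝ) a b := by
    intro a b
    rw [hsq]
    exact Finset.sum_nonneg fun x _ => mul_nonneg (hG.1 a x) (hG.1 x b)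
  obtain ⟨m, hm2, hml⟩ : ∃ m, 0 < (G ^ 2 : Matrix (Fin n) (Fin n) ℝ) i₁ m ∧ 0 < G m l := by
    rw [pow_succ, mul_apply] at h3
    obtain ⟨m, -, hm⟩ := Finset.exists_lt_of_sum_lt (f := fun _ => (0 : ℝ)) (by simpa using h3)
    exact ⟨m, pos_of_mul_pos_left hm (hG.1 m l), pos_of_mul_pos_right hm (hsq_nonneg i₁ m)⟩
  obtain ⟨j, hj, hjm⟩ : ∃ j, 0 < G i₁ j ∧ 0 < G j m := by
    rw [hsq] at hm2
    obtain ⟨j, -, hj⟩ := Finset.exists_lt_of_sum_lt (f := fun _ => (0 : ℝ)) (by simpa using hm2)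
    exact ⟨j, pos_of_mul_pos_left hj (hG.1 j m), pos_of_mul_pos_right hj (hG.1 i₁ j)⟩
  -- The chosen path has no shortcuts, since those would bring `l` closer to `i₁`.
  have him : i₁ ≠ m := by
    rintro rfl
    exact hml.ne' h1
  have hGm : G i₁ m = 0 := by
    by_contra hne
    exact (hsq_pos i₁ m l (lt_of_le_of_ne (hG.1 i₁ m) (Ne.symm hne)) hml).ne' h2
  have hij : i₁ ≠ j := by
    rintro rfl
    exact hj.ne' (hG.2.1 i₁)
  have hi₁ : ∑ x, G i₁ x = 1 := (hG.2.2 i₁).resolve_right fun h0 => hj.ne' (h0 j)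
  have hstep : ∀ u : Fin n → ℝ,
      (G *ᵥ (p • u + q • (G *ᵥ u) + r • (G *ᵥ (G *ᵥ u)))) i₁
        = (p • u + q • (G *ᵥ u) + r • (G *ᵥ (G *ᵥ u))) i₁ := by
    intro u
    set w := p • u + q • (G *ᵥ u) + r • (G *ᵥ (G *ᵥ u))
    have hterm : ∀ x ∈ Finset.univ, G i₁ x * w x = G i₁ x * w i₁ := by
      intro x _
      rcases (hG.1 i₁ x).eq_or_lt with h0 | hpos
      · simp [← h0]
      · exact congrArg (G i₁ x * ·) (h u x i₁ (hfriends x hpos) hi₁)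
    simp only [mulVec, dotProduct]
    rw [Finset.sum_congr rfl hterm, ← Finset.sum_mul, hi₁, one_mul]
  have hcol : ∀ x, i₁ ≠ x → p * G i₁ x + q * (G ^ 2 : Matrix (Fin n) (Fin n) ℝ) i₁ x
      + r * (G ^ 3 : Matrix (Fin n) (Fin n) ℝ) i₁ x
        = q * G i₁ x + r * (G ^ 2 : Matrix (Fin n) (Fin n) ℝ) i₁ x := by
    intro x hx
    have := hstep (Pi.single x 1)
    simp only [mulVec_add, mulVec_smul, mulVec_mulVec, ← pow_two, ← pow_succ'] at this
    simpa [hx] using this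
  have hr : r = 0 := by
    have := hcol l hil
    rw [h1, h2] at this
    have : r * (G ^ 3 : Matrix (Fin n) (Fin n) ℝ) i₁ l = 0 := by linarith
    exact (mul_eq_zero.mp this).resolve_right h3.ne'
  have hq : q = 0 := by
    have := hcol m him
    rw [hGm, hr] at this
    have : q * (G ^ 2 : Matrix (Fin n) (Fin n) ℝ) i₁ m = 0 := by linarith
    exact (mul_eq_zero.mp this).resolve_right hm2.ne'
  have hp : p = 0 := by
    have := hcol j hij
    rw [hq, hr] at this
    have : p * G i₁ j = 0 := by linarith
    exact (mul_eq_zero.mp this).resolve_right hj.ne'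
  exact ⟨hp, hq, hr⟩

end RowNormalized

/-- If `λ ∈ (0,1)`, `λβ̃ + γ̃ ≠ 0`, there are students `i₁ ≠ l` separated by a
link of distance exactly three (`G_{i₁l} = 0`, `(G²)_{i₁l} = 0`, `(G³)_{i₁l} > 0`), and every
friend of `i₁` is non-isolated, then the conditional-mean peer outcome
`(G y(X))_i`, with `y(X) = (I − λG)⁻¹(Xβ̃ + GXγ̃)`, is not perfectly collinear (in
within-school deviations between non-isolated students) with own and contextual
characteristics: the reflection problem does not arise. -/
theorem stmt_7 {n K : ℕ} (G : Matrix (Fin n) (Fin n) ℝ) (hG : RowNormalized G)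
    (lam : ℝ) (hlam0 : 0 < lam) (hlam1 : lam < 1)
    (βt γt : Fin K → ℝ) (hcontext : lam • βt + γt ≠ 0)
    (i₁ l : Fin n) (hil : i₁ ≠ l)
    (h1 : G i₁ l = 0) (h2 : (G ^ 2 : Matrix (Fin n) (Fin n) ℝ) i₁ l = 0)
    (h3 : 0 < (G ^ 3 : Matrix (Fin n) (Fin n) ℝ) i₁ l)
    (hfriends : ∀ j, 0 < G i₁ j → ∑ k, G j k = 1) :
    ¬ ∃ βd γd : Fin K → ℝ, ∀ X : Matrix (Fin n) (Fin K) ℝ,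
      ∀ i i' : Fin n, (∑ j, G i j = 1) → (∑ j, G i' j = 1) →
        (G *ᵥ ((1 - lam • G)⁻¹ *ᵥ (X *ᵥ βt + (G * X) *ᵥ γt))) i
            - (G *ᵥ ((1 - lam • G)⁻¹ *ᵥ (X *ᵥ βt + (G * X) *ᵥ γt))) i'
          = (X i - X i') ⬝ᵥ βd + ((G * X) i - (G * X) i') ⬝ᵥ γd := by
  rintro ⟨βd, γd, h⟩
  obtain ⟨k, hk⟩ := Function.ne_iff.mp hcontext
  obtain ⟨hp, hq, hr⟩ := hG.coeffs_eq_zero hil h1 h2 h3 hfriends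
    fun u i i' hi hi' => hG.peer_relation_reduces hlam0 hlam1 h k u hi hi'
  apply hk
  simp only [Pi.add_apply, Pi.smul_apply, smul_eq_mul, Pi.zero_apply]
  linear_combination hr + lam * hq + lam * lam * hp
end

section
/- Let G be a row-normalized interaction matrix such that both the isolated set and the non-isolated set are nonempty, and define ℓ^{NI} = G𝟙, ℓ^I = 𝟙 − ℓ^{NI}, n^{NI} = ∑_i ℓ^{NI}_i ≥ 1, n^I = ∑_i ℓ^I_i ≥ 1, and J = I − (1/n^I)ℓ^I(ℓ^I)ᵀ − (1/n^{NI})ℓ^{NI}(ℓ^{NI})ᵀ. Suppose: (a) there exist four distinct non-isolated indices i₁, i₂, i₃, i₄ such that G_{ab} = 0 for every ordered pair of distinct indices a, b among {i₁,i₂,i₃,i₄}, and (GGᵀ)_{ab} = 0 for every unordered pair of distinct indices among them except the pair {i₁,i₃}, for which (GGᵀ)_{i₁i₃} > 0; and (b) there exist four distinct non-isolated indices j₁, j₂, j₃, j₄ such that G_{ab} = 0 for every ordered pair of distinct indices among {j₁,j₂,j₃,j₄} except possibly (j₁,j₃) and (j₃,j₁), with G_{j₁j₃} + G_{j₃j₁}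 > 0. Then the three matrices J, J(G + Gᵀ)J, and J G Gᵀ J are linearly independent over ℝ: if b₁J + b₂J(G+Gᵀ)J + b₃JGGᵀJ = 0 for real b₁, b₂, b₃, then b₁ = b₂ = b₃ = 0. -/
/-!
The double difference `(e a - e b)ᵀ M (e c - e d) = M a c - M a d - M b c + M b d` taken over
non-isolated indices does not see `J`: the vector `e a - e b` is orthogonal to both group
indicators, so the projection `J` fixes it, and the double difference of `J * M * J` equals that
of `M` (`doubleDiff_sandwich`). Evaluating a vanishing linear combination of the three matrices
on double differences then isolates one coefficient at a time. On `(i₁, i₂; i₃, i₄)` the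
contributions of `J` and `G + Gᵀ` vanish and `G * Gᵀ` contributes `(G * Gᵀ) i₁ i₃ > 0`, so
`b₃ = 0`. On `(j₁, j₂; j₃, j₄)` only `G j₁ j₃ + G j₃ j₁ > 0` remains, so `b₂ = 0`. On
`(i₁, i₂; i₁, i₂)` the matrix `J` contributes `2`, so `b₁ = 0`.
-/

open Matrix

/-- The bilinear form of `M` evaluated at the difference vectors `e a - e b` and `e c - e d`. -/
def doubleDiff {n : ℕ} (a b c d : Fin n) (M : Matrix (Fin n) (Fin n) ℝ) : ℝ :=
  (Pi.single a 1 - Pi.single b 1) ⬝ᵥ M *ᵥ (Pi.single c 1 - Pi.single d 1)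

theorem doubleDiff_eq {n : ℕ} (a b c d : Fin n) (M : Matrix (Fin n) (Fin n) ℝ) :
    doubleDiff a b c d M = M a c - M a d - M b c + M b d := by
  simp [doubleDiff, mulVec_sub, sub_dotProduct]
  ring

/-- A matrix that differs from the identity by multiples of `p pᵀ` and `q qᵀ` fixes `e a - e b`
as soon as neither `p` nor `q` separates `a` from `b`. -/
theorem fix_diff {n : ℕ} (p q : Fin n → ℝ) (s t : ℝ) (a b : Fin n)
    (hp : p a = p b) (hq : q a = q b) :
    (1 - s • vecMulVec p p - t • vecMulVec q q) *ᵥ (Pi.single a 1 - Pi.single b 1 : Fin n → ℝ)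
      = Pi.single a 1 - Pi.single b 1 := by
  simp [sub_mulVec, smul_mulVec, vecMulVec_mulVec, dotProduct_sub, hp, hq]

/-- The double difference of `J * M * J` equals that of `M` when the symmetric matrix `J` fixes
both difference vectors. -/
theorem doubleDiff_sandwich {n : ℕ} (a b c d : Fin n) (J M : Matrix (Fin n) (Fin n) ℝ)
    (hJ : Jᵀ = J)
    (hab : J *ᵥ (Pi.single a 1 - Pi.single b 1 : Fin n → ℝ) = Pi.single a 1 - Pi.single b 1)
    (hcd : J *ᵥ (Pi.single c 1 - Pi.single d 1 : Fin n → ℝ) = Pi.single c 1 - Pi.single d 1) :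
    doubleDiff a b c d (J * M * J) = doubleDiff a b c d M := by
  have h : (Pi.single a 1 - Pi.single b 1 : Fin n → ℝ) ᵥ* J = Pi.single a 1 - Pi.single b 1 := by
    rw [← mulVec_transpose, hJ, hab]
  rw [doubleDiff, ← mulVec_mulVec, hcd, ← mulVec_mulVec, dotProduct_mulVec, h, doubleDiff]

/-- Under the network configurations (a) and (b) — four pairwise unlinked
non-isolated students of whom only `i₁, i₃` have a common friend, and four non-isolated
students of whom only `j₁, j₃` are linked — the matrices `J`, `J(G+Gᵀ)J`, and `JGGᵀJ`
are linearly independent over `ℝ`. -/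
theorem stmt_10 {n : ℕ} (G : Matrix (Fin n) (Fin n) ℝ) (hG : RowNormalized G)
    (hIso : ∃ i, ∀ j, G i j = 0) (hNIso : ∃ i, ∑ j, G i j = 1)
    (ℓNI ℓI : Fin n → ℝ)
    (hℓNI : ℓNI = G *ᵥ fun _ => (1 : ℝ)) (hℓI : ℓI = (fun _ => 1) - ℓNI)
    (nNI nI : ℝ) (hnNI : nNI = ∑ i, ℓNI i) (hnI : nI = ∑ i, ℓI i)
    (hnNI1 : 1 ≤ nNI) (hnI1 : 1 ≤ nI)
    (J : Matrix (Fin n) (Fin n) ℝ)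
    (hJ : J = 1 - (1 / nI) • Matrix.vecMulVec ℓI ℓI
        - (1 / nNI) • Matrix.vecMulVec ℓNI ℓNI)
    -- condition (a)
    (i₁ i₂ i₃ i₄ : Fin n) (ha_nodup : List.Nodup [i₁, i₂, i₃, i₄])
    (ha_ni : ∀ a ∈ [i₁, i₂, i₃, i₄], ∑ k, G a k = 1)
    (haG : ∀ a ∈ [i₁, i₂, i₃, i₄], ∀ b ∈ [i₁, i₂, i₃, i₄], a ≠ b → G a b = 0)
    (haGGt : ∀ a ∈ [i₁, i₂, i₃, i₄], ∀ b ∈ [i₁, i₂, i₃, i₄], a ≠ b →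
        ¬(a = i₁ ∧ b = i₃) → ¬(a = i₃ ∧ b = i₁) → (G * Gᵀ) a b = 0)
    (haPos : 0 < (G * Gᵀ) i₁ i₃)
    -- condition (b)
    (j₁ j₂ j₃ j₄ : Fin n) (hb_nodup : List.Nodup [j₁, j₂, j₃, j₄])
    (hb_ni : ∀ a ∈ [j₁, j₂, j₃, j₄], ∑ k, G a k = 1)
    (hbG : ∀ a ∈ [j₁, j₂, j₃, j₄], ∀ b ∈ [j₁, j₂, j₃, j₄], a ≠ b →
        ¬(a = j₁ ∧ b = j₃) → ¬(a = j₃ ∧ b = j₁) → G a b = 0)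
    (hbPos : 0 < G j₁ j₃ + G j₃ j₁) :
    ∀ b₁ b₂ b₃ : ℝ,
      b₁ • J + b₂ • (J * (G + Gᵀ) * J) + b₃ • (J * G * Gᵀ * J) = 0 →
      b₁ = 0 ∧ b₂ = 0 ∧ b₃ = 0 := by
  intro b₁ b₂ b₃ h
  have hJt : Jᵀ = J := by
    rw [hJ]; simp [transpose_vecMulVec]
  have hone : ∀ a, ∑ k, G a k = 1 → ℓNI a = 1 := by
    intro a ha
    simp [hℓNI, mulVec, dotProduct, ha]
  have hfix : ∀ a b, ∑ k, G a k = 1 → ∑ k, G b k = 1 →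
      J *ᵥ (Pi.single a 1 - Pi.single b 1 : Fin n → ℝ) = Pi.single a 1 - Pi.single b 1 := by
    intro a b ha hb
    rw [hJ]
    exact fix_diff _ _ _ _ _ _ (by simp [hℓI, hone a ha, hone b hb])
      (by simp [hone a ha, hone b hb])
  have key : ∀ a b c d, ∑ k, G a k = 1 → ∑ k, G b k = 1 → ∑ k, G c k = 1 → ∑ k, G d k = 1 →
      b₁ * doubleDiff a b c d 1 + b₂ * doubleDiff a b c d (G + Gᵀ)
        + b₃ * doubleDiff a b c d (G * Gᵀ) = 0 := by
    intro a b c d ha hb hc hd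
    have hJ1 : doubleDiff a b c d J = doubleDiff a b c d 1 := by
      rw [doubleDiff, hfix c d hc hd, doubleDiff, one_mulVec]
    rw [← hJ1, ← doubleDiff_sandwich a b c d J (G + Gᵀ) hJt (hfix a b ha hb) (hfix c d hc hd),
      ← doubleDiff_sandwich a b c d J (G * Gᵀ) hJt (hfix a b ha hb) (hfix c d hc hd),
      ← Matrix.mul_assoc J G Gᵀ]
    have h0 := congrArg (doubleDiff a b c d) h
    simp only [doubleDiff_eq, Matrix.add_apply, Matrix.smul_apply, smul_eq_mul, Matrix.zero_apply] at h0 ⊢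
    linarith
  simp only [List.nodup_cons, List.mem_cons, List.not_mem_nil, or_false, not_or,
    List.nodup_nil, not_false_eq_true, and_true] at ha_nodup hb_nodup
  obtain ⟨⟨a12, a13, a14⟩, ⟨a23, a24⟩, a34⟩ := ha_nodup
  obtain ⟨⟨c12, c13, c14⟩, ⟨c23, c24⟩, c34⟩ := hb_nodup
  have hb₃ : b₃ = 0 := by
    have k := key i₁ i₂ i₃ i₄ (ha_ni _ (by simp)) (ha_ni _ (by simp)) (ha_ni _ (by simp))
      (ha_ni _ (by simp))
    have e14 := haGGt i₁ (by simp) i₄ (by simp) a14 (by tauto) (by tauto)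
    have e23 := haGGt i₂ (by simp) i₃ (by simp) a23 (by tauto) (by tauto)
    have e24 := haGGt i₂ (by simp) i₄ (by simp) a24 (by tauto) (by tauto)
    simp only [doubleDiff_eq, e14, e23, e24, Matrix.add_apply, transpose_apply,
      one_apply_ne a13, one_apply_ne a14, one_apply_ne a23, one_apply_ne a24,
      haG i₁ (by simp) i₃ (by simp) a13, haG i₃ (by simp) i₁ (by simp) (Ne.symm a13),
      haG i₁ (by simp) i₄ (by simp) a14, haG i₄ (by simp) i₁ (by simp) (Ne.symm a14),
      haG i₂ (by simp) i₃ (by simp) a23, haG i₃ (by simp) i₂ (by simp) (Ne.symm a23),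
      haG i₂ (by simp) i₄ (by simp) a24, haG i₄ (by simp) i₂ (by simp) (Ne.symm a24)] at k
    have k' : b₃ * (G * Gᵀ) i₁ i₃ = 0 := by linarith
    exact (mul_eq_zero.mp k').resolve_right haPos.ne'
  have hb₂ : b₂ = 0 := by
    have k := key j₁ j₂ j₃ j₄ (hb_ni _ (by simp)) (hb_ni _ (by simp)) (hb_ni _ (by simp))
      (hb_ni _ (by simp))
    have e14 := hbG j₁ (by simp) j₄ (by simp) c14 (by tauto) (by tauto)
    have e41 := hbG j₄ (by simp) j₁ (by simp) (Ne.symm c14) (by tauto) (by tauto)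
    have e23 := hbG j₂ (by simp) j₃ (by simp) c23 (by tauto) (by tauto)
    have e32 := hbG j₃ (by simp) j₂ (by simp) (Ne.symm c23) (by tauto) (by tauto)
    have e24 := hbG j₂ (by simp) j₄ (by simp) c24 (by tauto) (by tauto)
    have e42 := hbG j₄ (by simp) j₂ (by simp) (Ne.symm c24) (by tauto) (by tauto)
    simp only [hb₃, doubleDiff_eq, Matrix.add_apply, transpose_apply, e14, e41, e23, e32, e24, e42,
      one_apply_ne c13, one_apply_ne c14, one_apply_ne c23, one_apply_ne c24] at k
    have k' : b₂ * (G j₁ j₃ + G j₃ j₁) = 0 := by linarith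
    exact (mul_eq_zero.mp k').resolve_right hbPos.ne'
  have hb₁ : b₁ = 0 := by
    have k := key i₁ i₂ i₁ i₂ (ha_ni _ (by simp)) (ha_ni _ (by simp)) (ha_ni _ (by simp))
      (ha_ni _ (by simp))
    simp only [hb₃, hb₂, doubleDiff_eq, one_apply_eq, one_apply_ne a12,
      one_apply_ne (Ne.symm a12)] at k
    linarith
  exact ⟨hb₁, hb₂, hb₃⟩
end
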